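/- Drift of preconditioned local directions (eq. A.57). Let A be a symmetric positive definite d×d real matrix with A ⪰ ρI_d, ρ > 0. For each m ∈ {1,…,M}, let u^m ∈ ℝ^{p×d} with Frobenius norm ‖u^m‖ ≤ C_g and v^m ∈ ℝ^p with ‖v^m‖ ≤ C_f. Set w^m = (u^m)ᵀv^m, w̄ = (1/M)∑_m w^m, d^m = A^{-1}w^m, d̄ = A^{-1}w̄, ū = (1/M)∑_m u^m, v̄ = (1/M)∑_m v^m. Then ∑_{m=1}^M ‖d^m − d̄‖² ≤ (9C_g²/ρ²) ∑_{m=1}^M ‖v^m − v̄‖² + (9C_f²/ρ²) ∑_{m=1}^M ‖u^m − ū‖². -/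

import Mathlib

open Matrix

noncomputable section

/-- Frobenius norm of a real matrix. -/
def frobNorm {p d : ℕ} (A : Matrix (Fin p) (Fin d) ℝ) : ℝ :=
  Real.sqrt (∑ i, ∑ j, A i j ^ 2)

/-- Apply a real matrix to a Euclidean vector. -/
def mApply {p d : ℕ} (A : Matrix (Fin p) (Fin d) ℝ)
    (v : EuclideanSpace ℝ (Fin d)) : EuclideanSpace ℝ (Fin p) :=
  (WithLp.equiv 2 (Fin p → ℝ)).symm (A.mulVec (WithLp.equiv 2 (Fin d → ℝ) v))

lemma mApply_eq {p d : ℕ} (A : Matrix (Fin p) (Fin d) ℝ) (v : EuclideanSpace ℝ (Fin d)) :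
    mApply A v = Matrix.toEuclideanLin A v := rfl

lemma frobNorm_nonneg {p d : ℕ} (A : Matrix (Fin p) (Fin d) ℝ) : 0 ≤ frobNorm A :=
  Real.sqrt_nonneg _

lemma mApply_transpose_le {p d : ℕ} (A : Matrix (Fin p) (Fin d) ℝ)
    (v : EuclideanSpace ℝ (Fin p)) : ‖mApply Aᵀ v‖ ≤ frobNorm A * ‖v‖ := by
  rw [EuclideanSpace.norm_eq, EuclideanSpace.norm_eq, frobNorm, ← Real.sqrt_mul (by positivity)]
  apply Real.sqrt_le_sqrt
  rw [Finset.sum_comm, Finset.sum_mul]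
  apply Finset.sum_le_sum
  intro j _
  have h : (mApply Aᵀ v) j = ∑ i, A i j * v i := rfl
  rw [h]
  simp only [Real.norm_eq_abs, sq_abs]
  exact Finset.sum_mul_sq_le_sq_mul_sq _ _ _

lemma mApply_lower {d : ℕ} (ρ : ℝ) (hρ : 0 < ρ)
    (A : Matrix (Fin d) (Fin d) ℝ) (hA : A.IsHermitian)
    (heig : ∀ i, ρ ≤ hA.eigenvalues i) (x : EuclideanSpace ℝ (Fin d)) :
    ρ * ‖x‖ ≤ ‖mApply A x‖ := by
  have key : ∀ i, inner ℝ (hA.eigenvectorBasis i) (mApply A x)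
      = hA.eigenvalues i * inner ℝ (hA.eigenvectorBasis i) x := by
    intro i
    have hs := (Matrix.isSymmetric_toEuclideanLin_iff.2 hA) (hA.eigenvectorBasis i) x
    rw [mApply_eq, ← hs]
    have he : Matrix.toEuclideanLin A (hA.eigenvectorBasis i)
        = hA.eigenvalues i • hA.eigenvectorBasis i := by
      apply (WithLp.equiv 2 (Fin d → ℝ)).injective
      exact hA.mulVec_eigenvectorBasis i
    rw [he, real_inner_smul_left]
  have h1 := hA.eigenvectorBasis.sum_sq_norm_inner_right x
  have h2 := hA.eigenvectorBasis.sum_sq_norm_inner_right (mApply A x)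
  refine le_of_pow_le_pow_left₀ two_ne_zero (norm_nonneg _) ?_
  rw [mul_pow, ← h1, ← h2, Finset.mul_sum]
  apply Finset.sum_le_sum
  intro i _
  rw [key i, norm_mul, mul_pow, Real.norm_eq_abs (hA.eigenvalues i), sq_abs]
  have := heig i
  gcongr

lemma mApply_inv_le {d : ℕ} (ρ : ℝ) (hρ : 0 < ρ)
    (A : Matrix (Fin d) (Fin d) ℝ) (hA : A.IsHermitian)
    (heig : ∀ i, ρ ≤ hA.eigenvalues i) (x : EuclideanSpace ℝ (Fin d)) :
    ρ * ‖mApply A⁻¹ x‖ ≤ ‖x‖ := by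
  have hdet : IsUnit A.det := by
    rw [hA.det_eq_prod_eigenvalues, isUnit_iff_ne_zero]
    apply Finset.prod_ne_zero_iff.2
    intro i _
    exact (lt_of_lt_of_le hρ (heig i)).ne'
  have h := mApply_lower ρ hρ A hA heig (mApply A⁻¹ x)
  have e : mApply A (mApply A⁻¹ x) = x := by
    simp [mApply, Matrix.mulVec_mulVec, Matrix.mul_nonsing_inv A hdet]
  rwa [e] at h

lemma variance_le {E : Type*} [NormedAddCommGroup E] [InnerProductSpace ℝ E] {M : ℕ}
    (hM : 0 < M) (w : Fin M → E) (c : E) :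
    ∑ m, ‖w m - (M : ℝ)⁻¹ • ∑ j, w j‖ ^ 2 ≤ ∑ m, ‖w m - c‖ ^ 2 := by
  have hM' : (M : ℝ) ≠ 0 := by positivity
  set b := (M : ℝ)⁻¹ • ∑ j, w j with hb
  have h0 : ∑ m, (w m - b) = 0 := by
    rw [Finset.sum_sub_distrib, Finset.sum_const, Finset.card_univ, Fintype.card_fin,
      ← Nat.cast_smul_eq_nsmul ℝ, hb, smul_smul, mul_inv_cancel₀ hM', one_smul, sub_self]
  have h1 : ∀ m, ‖w m - c‖ ^ 2
      = ‖w m - b‖ ^ 2 + 2 * inner ℝ (w m - b) (b - c) + ‖b - c‖ ^ 2 := by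
    intro m
    rw [← norm_add_sq_real]
    congr 2
    abel
  have h2 : ∑ m, inner ℝ (w m - b) (b - c) = (0 : ℝ) := by
    rw [← sum_inner, h0, inner_zero_left]
  simp only [h1, Finset.sum_add_distrib, ← Finset.mul_sum, h2]
  have : 0 ≤ ∑ _m : Fin M, ‖b - c‖ ^ 2 := by positivity
  linarith

/-- **Drift of preconditioned local directions (eq. A.57).**
For a symmetric matrix `A` with all eigenvalues at least `ρ > 0`, matrices `uᵐ` with Frobenius
norm at most `Cg` and vectors `vᵐ` with `‖vᵐ‖ ≤ Cf`, setting `wᵐ = (uᵐ)ᵀvᵐ`, `dᵐ = A⁻¹wᵐ` and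
`d̄ = A⁻¹w̄`, one has
`∑ₘ ‖dᵐ − d̄‖² ≤ (9Cg²/ρ²)∑ₘ ‖vᵐ − v̄‖² + (9Cf²/ρ²)∑ₘ ‖uᵐ − ū‖²`. -/
theorem drift_preconditioned_directions
    {d p M : ℕ} (hM : 0 < M)
    (ρ Cg Cf : ℝ) (hρ : 0 < ρ)
    (A : Matrix (Fin d) (Fin d) ℝ) (hA : A.IsHermitian)
    (heig : ∀ i, ρ ≤ hA.eigenvalues i)
    (u : Fin M → Matrix (Fin p) (Fin d) ℝ)
    (v : Fin M → EuclideanSpace ℝ (Fin p))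
    (hu : ∀ m, frobNorm (u m) ≤ Cg)
    (hv : ∀ m, ‖v m‖ ≤ Cf) :
    ∑ m, ‖mApply A⁻¹ (mApply (u m)ᵀ (v m)) -
          mApply A⁻¹ ((M : ℝ)⁻¹ • ∑ j, mApply (u j)ᵀ (v j))‖ ^ 2 ≤
      (9 * Cg ^ 2 / ρ ^ 2) * ∑ m, ‖v m - (M : ℝ)⁻¹ • ∑ j, v j‖ ^ 2
        + (9 * Cf ^ 2 / ρ ^ 2) * ∑ m, frobNorm (u m - (M : ℝ)⁻¹ • ∑ j, u j) ^ 2 := by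
  have hM' : (0 : ℝ) < M := by exact_mod_cast hM
  set vb := (M : ℝ)⁻¹ • ∑ j, v j with hvb
  set ub := (M : ℝ)⁻¹ • ∑ j, u j with hub
  have hCf : 0 ≤ Cf := (norm_nonneg _).trans (hv ⟨0, hM⟩)
  have hvb' : ‖vb‖ ≤ Cf := by
    rw [hvb, norm_smul, norm_inv, Real.norm_natCast, inv_mul_le_iff₀ hM']
    calc ‖∑ j, v j‖ ≤ ∑ j : Fin M, Cf := norm_sum_le_of_le _ (fun j _ => hv j)
      _ = M * Cf := by simp
  have step1 : ∀ m, ‖mApply A⁻¹ (mApply (u m)ᵀ (v m)) -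
      mApply A⁻¹ ((M : ℝ)⁻¹ • ∑ j, mApply (u j)ᵀ (v j))‖ ^ 2 ≤
      (ρ ^ 2)⁻¹ * ‖mApply (u m)ᵀ (v m) - (M : ℝ)⁻¹ • ∑ j, mApply (u j)ᵀ (v j)‖ ^ 2 := by
    intro m
    rw [mApply_eq A⁻¹, mApply_eq A⁻¹, ← map_sub, ← mApply_eq A⁻¹]
    rw [le_inv_mul_iff₀ (by positivity), ← mul_pow]
    gcongr
    exact mApply_inv_le ρ hρ A hA heig _
  have step2 : ∀ m, ‖mApply (u m)ᵀ (v m) - mApply ubᵀ vb‖ ^ 2 ≤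
      9 * Cg ^ 2 * ‖v m - vb‖ ^ 2 + 9 * Cf ^ 2 * frobNorm (u m - ub) ^ 2 := by
    intro m
    have e : mApply (u m)ᵀ (v m) - mApply ubᵀ vb
        = mApply (u m)ᵀ (v m - vb) + mApply (u m - ub)ᵀ vb := by
      simp only [mApply_eq, Matrix.transpose_sub, map_sub, LinearMap.sub_apply]
      abel
    have h1 : ‖mApply (u m)ᵀ (v m - vb)‖ ≤ Cg * ‖v m - vb‖ :=
      (mApply_transpose_le _ _).trans (mul_le_mul_of_nonneg_right (hu m) (norm_nonneg _))
    have h2 : ‖mApply (u m - ub)ᵀ vb‖ ≤ frobNorm (u m - ub) * Cf :=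
      (mApply_transpose_le _ _).trans (mul_le_mul_of_nonneg_left hvb' (frobNorm_nonneg _))
    have h3 : ‖mApply (u m)ᵀ (v m) - mApply ubᵀ vb‖
        ≤ Cg * ‖v m - vb‖ + frobNorm (u m - ub) * Cf := by
      rw [e]
      exact (norm_add_le _ _).trans (add_le_add h1 h2)
    have h4 := pow_le_pow_left₀ (norm_nonneg _) h3 2
    nlinarith [sq_nonneg (Cg * ‖v m - vb‖ - frobNorm (u m - ub) * Cf),
      sq_nonneg (Cg * ‖v m - vb‖), sq_nonneg (frobNorm (u m - ub) * Cf)]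
  calc _ ≤ ∑ m, (ρ ^ 2)⁻¹ * ‖mApply (u m)ᵀ (v m) -
        (M : ℝ)⁻¹ • ∑ j, mApply (u j)ᵀ (v j)‖ ^ 2 := Finset.sum_le_sum fun m _ => step1 m
    _ = (ρ ^ 2)⁻¹ * ∑ m, ‖mApply (u m)ᵀ (v m) -
        (M : ℝ)⁻¹ • ∑ j, mApply (u j)ᵀ (v j)‖ ^ 2 := by rw [Finset.mul_sum]
    _ ≤ (ρ ^ 2)⁻¹ * ∑ m, ‖mApply (u m)ᵀ (v m) - mApply ubᵀ vb‖ ^ 2 :=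
        mul_le_mul_of_nonneg_left (variance_le hM (fun m => mApply (u m)ᵀ (v m)) _)
          (by positivity)
    _ ≤ (ρ ^ 2)⁻¹ * ∑ m, (9 * Cg ^ 2 * ‖v m - vb‖ ^ 2
          + 9 * Cf ^ 2 * frobNorm (u m - ub) ^ 2) :=
        mul_le_mul_of_nonneg_left (Finset.sum_le_sum fun m _ => step2 m) (by positivity)
    _ = _ := by
        rw [Finset.sum_add_distrib, ← Finset.mul_sum, ← Finset.mul_sum]
        ring
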